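/- arXiv:2007.00148 — 6 statements merged into one kernel-verified Lean document; each statement's English description precedes it below -/
import Mathlib

section
/- Let 𝒜 be a nonempty finite set, H ≥ 0 a real number, α > 0, and Q : 𝒜 → ℝ a function with 0 ≤ Q(a) ≤ H for all a ∈ 𝒜. Let p* and p be pmfs on 𝒜 with p(a) > 0 for every a, and define the pmf p' by p'(a) = p(a)·exp(α·Q(a)) / Σ_{b∈𝒜} p(b)·exp(α·Q(b)). Then Σ_{a∈𝒜} Q(a)·(p*(a) − p(a)) ≤ (1/2)·α·H² + (1/α)·[KL(p*‖p) − KL(p*‖p')]. -/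
/-! With `Z = ∑ b, p b * exp (α * Q b)` one has `log (p' a / p a) = α * Q a - log Z`, so the
difference of the two divergences equals `α * ∑ a, pstar a * Q a - log Z` exactly. The claim is
therefore equivalent to `log Z ≤ α * ∑ a, p a * Q a + (α * H) ^ 2 / 2`, a weak form of Hoeffding's
lemma (`sum_mul_exp_le`). For the latter, the centred variable `Q - ∑ p Q` takes values in
`[-H, H]`, so convexity of `exp` bounds its exponential by an affine function with constant term
`cosh (α * H)`; the linear term has mean zero, and `cosh x ≤ exp (x ^ 2 / 2)`. -/

/-- Hoeffding's lemma for a finite distribution, with the constant `1 / 2` in place of the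
optimal `1 / 8`. -/
lemma sum_mul_exp_le {𝒜 : Type*} [Fintype 𝒜] (H α : ℝ) (hH : 0 ≤ H)
    (Q p : 𝒜 → ℝ) (hQ : ∀ a, 0 ≤ Q a ∧ Q a ≤ H)
    (hp : ∀ a, 0 ≤ p a) (hp_sum : ∑ a, p a = 1) :
    ∑ a, p a * Real.exp (α * Q a) ≤
      Real.exp (α * ∑ a, p a * Q a + (α * H) ^ 2 / 2) := by
  set m := ∑ a, p a * Q a with hm
  have hm0 : 0 ≤ m := Finset.sum_nonneg fun a _ => mul_nonneg (hp a) (hQ a).1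
  have hmH : m ≤ H := by
    calc m ≤ ∑ a, p a * H := Finset.sum_le_sum fun a _ =>
          mul_le_mul_of_nonneg_left (hQ a).2 (hp a)
      _ = H := by rw [← Finset.sum_mul, hp_sum, one_mul]
  have habs : ∀ a, |Q a - m| ≤ H := fun a => by
    have := hQ a
    rw [abs_le]
    constructor <;> linarith
  have hpt : ∀ a, Real.exp (α * Q a) ≤ Real.exp (α * m) *
      (Real.cosh (α * H) + (Q a - m) / H * Real.sinh (α * H)) := fun a => by
    have ht : |(Q a - m) / H| ≤ 1 := by
      rw [abs_div, abs_of_nonneg hH]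
      exact div_le_one_of_le₀ (habs a) hH
    -- This also holds for `H = 0`, since then `Q a = m`.
    have hx : (Q a - m) / H * (α * H) = α * Q a - α * m := by
      rcases hH.eq_or_lt with h | h
      · have h0 : Q a - m = 0 := abs_nonpos_iff.1 (by simpa [← h] using habs a)
        rw [h0, ← mul_sub, h0]
        simp
      · field_simp
    have key := Real.exp_mul_le_cosh_add_mul_sinh ht (α * H)
    rw [hx] at key
    calc Real.exp (α * Q a) = Real.exp (α * m) * Real.exp (α * Q a - α * m) := by
          rw [← Real.exp_add]
          ring_nf
      _ ≤ _ := mul_le_mul_of_nonneg_left key (Real.exp_pos _).le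
  have hcentred : ∑ a, p a * (Q a - m) = 0 := by
    simp only [mul_sub, Finset.sum_sub_distrib, ← Finset.sum_mul, hp_sum, ← hm]
    ring
  calc ∑ a, p a * Real.exp (α * Q a)
      ≤ ∑ a, p a * (Real.exp (α * m) *
          (Real.cosh (α * H) + (Q a - m) / H * Real.sinh (α * H))) :=
        Finset.sum_le_sum fun a _ => mul_le_mul_of_nonneg_left (hpt a) (hp a)
    _ = (∑ a, p a) * (Real.exp (α * m) * Real.cosh (α * H)) +
          (∑ a, p a * (Q a - m)) * (Real.exp (α * m) / H * Real.sinh (α * H)) := by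
        rw [Finset.sum_mul, Finset.sum_mul, ← Finset.sum_add_distrib]
        exact Finset.sum_congr rfl fun a _ => by ring
    _ = Real.exp (α * m) * Real.cosh (α * H) := by rw [hp_sum, hcentred]; ring
    _ ≤ Real.exp (α * m) * Real.exp ((α * H) ^ 2 / 2) :=
        mul_le_mul_of_nonneg_left (Real.cosh_le_exp_half_sq _) (Real.exp_pos _).le
    _ = _ := (Real.exp_add _ _).symm

/-- One-step mirror-descent (exponential-weights) improvement bound
(Lemma 3.3 of Cai et al., as used in the paper). -/
theorem one_step_descent {𝒜 : Type*} [Fintype 𝒜] [Nonempty 𝒜]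
    (H α : ℝ) (hH : 0 ≤ H) (hα : 0 < α)
    (Q : 𝒜 → ℝ) (hQ : ∀ a, 0 ≤ Q a ∧ Q a ≤ H)
    (pstar p p' : 𝒜 → ℝ)
    (hpstar_nonneg : ∀ a, 0 ≤ pstar a) (hpstar_sum : ∑ a, pstar a = 1)
    (hp_pos : ∀ a, 0 < p a) (hp_sum : ∑ a, p a = 1)
    (hp' : ∀ a, p' a =
      p a * Real.exp (α * Q a) / ∑ b, p b * Real.exp (α * Q b)) :
    ∑ a, Q a * (pstar a - p a) ≤
      (1 / 2) * α * H ^ 2 +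
        (1 / α) * ((∑ a, pstar a * Real.log (pstar a / p a)) -
          (∑ a, pstar a * Real.log (pstar a / p' a))) := by
  have hoeff := sum_mul_exp_le H α hH Q p hQ (fun a => (hp_pos a).le) hp_sum
  set Z := ∑ b, p b * Real.exp (α * Q b) with hZ
  have hZpos : 0 < Z := Finset.sum_pos
    (fun a _ => mul_pos (hp_pos a) (Real.exp_pos _)) Finset.univ_nonempty
  have hlogZ : Real.log Z ≤ α * ∑ a, p a * Q a + (α * H) ^ 2 / 2 :=
    (Real.log_le_iff_le_exp hZpos).2 hoeff
  have hKL : (∑ a, pstar a * Real.log (pstar a / p a)) -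
      (∑ a, pstar a * Real.log (pstar a / p' a)) =
      α * (∑ a, pstar a * Q a) - Real.log Z := by
    have hterm : ∀ a, pstar a * Real.log (pstar a / p a) -
        pstar a * Real.log (pstar a / p' a) =
        α * (pstar a * Q a) - pstar a * Real.log Z := fun a => by
      rcases (hpstar_nonneg a).eq_or_lt with h | h
      · simp [← h]
      · have hpa := hp_pos a
        have hnum : 0 < p a * Real.exp (α * Q a) := mul_pos hpa (Real.exp_pos _)
        rw [hp' a, Real.log_div h.ne' hpa.ne', Real.log_div h.ne' (div_pos hnum hZpos).ne',
          Real.log_div hnum.ne' hZpos.ne', Real.log_mul hpa.ne' (Real.exp_pos _).ne',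
          Real.log_exp]
        ring
    rw [← Finset.sum_sub_distrib, Finset.sum_congr rfl fun a _ => hterm a,
      Finset.sum_sub_distrib, ← Finset.mul_sum, ← Finset.sum_mul, hpstar_sum, one_mul]
  have hlhs : ∑ a, Q a * (pstar a - p a) = (∑ a, pstar a * Q a) - ∑ a, p a * Q a := by
    rw [← Finset.sum_sub_distrib]
    exact Finset.sum_congr rfl fun a _ => by ring
  rw [hKL, hlhs]
  calc (∑ a, pstar a * Q a) - ∑ a, p a * Q a
      = 1 / 2 * α * H ^ 2 + 1 / α * (α * (∑ a, pstar a * Q a) -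
          (α * ∑ a, p a * Q a + (α * H) ^ 2 / 2)) := by
        field_simp
        ring
    _ ≤ _ := by gcongr
end

section
/- Let 𝒜 be a nonempty finite set of size A, H ≥ 0 a real number, α > 0, and let τ, L be positive integers with K = L·τ. Let Q¹,…,Q^K : 𝒜 → ℝ satisfy 0 ≤ Q^k(a) ≤ H for all k, a. Define restarted exponential-weights iterates p¹,…,p^K as follows: for every period l ∈ [L], p^{(l−1)τ+1} is the uniform pmf on 𝒜, and for (l−1)τ+1 ≤ k ≤ lτ−1, p^{k+1}(a) = p^k(a)·exp(α·Q^k(a)) / Σ_{b∈𝒜} p^k(b)·exp(α·Q^k(b)). Then for every sequence of comparator pmfs q¹,…,q^K on 𝒜 (with the convention q⁰ = q¹), Σ_{k=1}^{K} Σ_{a∈𝒜} Q^k(a)·(q^k(a) − p^k(a)) ≤ (1/2)·α·K·H² + L·(log A)/α + τ·H·Σ_{k=1}^{K} ‖q^k − q^{k−1}‖₁. -/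
/-!
Each period of length `τ` is treated separately. Within a period the comparator is frozen at its
value `u` at the first step of the period.

* Against the fixed `u` the usual exponential-weights potential `∑ a, u a * log (p a)` increases in
  one step by `α ⟨u, Q⟩ - log Z`, where `Z` is the normaliser. Hoeffding's bound
  `log Z ≤ α ⟨p, Q⟩ + α² H² / 2` (`log_normaliser_le`) turns this into a one-step regret
  bound (`one_step_regret`). The potential starts at `-log A` and stays nonpositive, so the regret
  over the period is at most `α τ H² / 2 + log A / α` (`static_regret`).
* Replacing `q k` by `u` costs at most `H ‖q k - u‖₁` at each of the `τ` steps, and by the triangle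
  inequality `‖q k - u‖₁` is at most the path length of `q` over the period (`drift_le`).

Summing over the `L` periods gives the claim.
-/

/-- The exponential-weights update of the weights `w` with payoff `g` and learning rate `α`. -/
noncomputable def ewUpdate {𝒜 : Type*} [Fintype 𝒜] (α : ℝ) (g w : 𝒜 → ℝ) : 𝒜 → ℝ :=
  fun a => w a * Real.exp (α * g a) / ∑ b, w b * Real.exp (α * g b)

/-- Exponential weights started from the uniform pmf and run without restarts on the payoffs `g`. -/
noncomputable def ewIter {𝒜 : Type*} [Fintype 𝒜] (α : ℝ) (g : ℕ → 𝒜 → ℝ) : ℕ → 𝒜 → ℝ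
  | 0 => fun _ => 1 / (Fintype.card 𝒜 : ℝ)
  | i + 1 => ewUpdate α (g i) (ewIter α g i)

section

variable {𝒜 : Type*} [Fintype 𝒜]

lemma normaliser_pos [Nonempty 𝒜] {α : ℝ} {g w : 𝒜 → ℝ} (hw : ∀ a, 0 < w a) :
    0 < ∑ b, w b * Real.exp (α * g b) :=
  Finset.sum_pos (fun b _ => mul_pos (hw b) (Real.exp_pos _)) Finset.univ_nonempty

/-- Hoeffding's lemma for a payoff with values in `[0, H]`, with the constant `1 / 2` that results
from using only that the centred payoff lies in `[-H, H]`. -/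
lemma log_normaliser_le [Nonempty 𝒜] {α H : ℝ} {g w : 𝒜 → ℝ} (hw : ∀ a, 0 < w a)
    (hw1 : ∑ a, w a = 1) (hg : ∀ a, 0 ≤ g a ∧ g a ≤ H) :
    Real.log (∑ b, w b * Real.exp (α * g b)) ≤
      α * (∑ a, w a * g a) + (1 / 2) * α ^ 2 * H ^ 2 := by
  set m := ∑ a, w a * g a with hm
  have hm0 : 0 ≤ m := Finset.sum_nonneg fun a _ => mul_nonneg (hw a).le (hg a).1
  have hmH : m ≤ H := by
    calc m ≤ ∑ a, w a * H :=
          Finset.sum_le_sum fun a _ => mul_le_mul_of_nonneg_left (hg a).2 (hw a).le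
      _ = H := by rw [← Finset.sum_mul, hw1, one_mul]
  -- The chord of `exp` over `[-α H, α H]`; for `H = 0` the quotient is `0 / 0 = 0`, as it should be.
  have key : ∀ a, Real.exp (α * g a) ≤
      Real.exp (α * m) *
        (Real.cosh (α * H) + (g a - m) / H * Real.sinh (α * H)) := by
    intro a
    have h1 : |(g a - m) / H| ≤ 1 := by
      have hH : 0 ≤ H := hm0.trans hmH
      rw [abs_div, abs_of_nonneg hH]
      refine div_le_one_of_le₀ ?_ hH
      rw [abs_le]
      constructor <;> linarith [(hg a).1, (hg a).2]
    have h2 : (g a - m) / H * (α * H) = α * (g a - m) := by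
      rcases eq_or_ne H 0 with h0 | h0
      · have : g a - m = 0 := by linarith [(hg a).1, (hg a).2]
        simp [this]
      · field_simp
    have h3 := Real.exp_mul_le_cosh_add_mul_sinh h1 (α * H)
    rw [h2] at h3
    calc Real.exp (α * g a) = Real.exp (α * m) * Real.exp (α * (g a - m)) := by
          rw [← Real.exp_add]; ring_nf
      _ ≤ _ := mul_le_mul_of_nonneg_left h3 (Real.exp_pos _).le
  have hcentred : ∑ a, w a * (g a - m) = 0 := by
    simp only [mul_sub, Finset.sum_sub_distrib, ← Finset.sum_mul, hw1, ← hm]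
    ring
  have hZ : ∑ b, w b * Real.exp (α * g b) ≤ Real.exp (α * m) * Real.cosh (α * H) := by
    calc ∑ b, w b * Real.exp (α * g b)
        ≤ ∑ b, w b * (Real.exp (α * m) *
            (Real.cosh (α * H) + (g b - m) / H * Real.sinh (α * H))) :=
          Finset.sum_le_sum fun b _ => mul_le_mul_of_nonneg_left (key b) (hw b).le
      _ = (∑ b, w b) * (Real.exp (α * m) * Real.cosh (α * H)) +
            (∑ b, w b * (g b - m)) * (Real.exp (α * m) / H * Real.sinh (α * H)) := by
          rw [Finset.sum_mul, Finset.sum_mul, ← Finset.sum_add_distrib]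
          refine Finset.sum_congr rfl fun b _ => ?_
          ring
      _ = _ := by rw [hw1, hcentred]; ring
  rw [Real.log_le_iff_le_exp (normaliser_pos hw), Real.exp_add]
  refine hZ.trans (mul_le_mul_of_nonneg_left ?_ (Real.exp_pos _).le)
  refine (Real.cosh_le_exp_half_sq _).trans (le_of_eq ?_)
  ring_nf

lemma ewUpdate_pos [Nonempty 𝒜] {α : ℝ} {g w : 𝒜 → ℝ} (hw : ∀ a, 0 < w a) (a : 𝒜) :
    0 < ewUpdate α g w a :=
  div_pos (mul_pos (hw a) (Real.exp_pos _)) (normaliser_pos hw)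

lemma sum_ewUpdate [Nonempty 𝒜] {α : ℝ} {g w : 𝒜 → ℝ} (hw : ∀ a, 0 < w a) :
    ∑ a, ewUpdate α g w a = 1 := by
  simp only [ewUpdate]
  rw [← Finset.sum_div, div_self (normaliser_pos hw).ne']

/-- One step of exponential weights: the regret against `u` is paid for by the increase of the
potential `∑ a, u a * log (w a)`. -/
lemma one_step_regret [Nonempty 𝒜] {α H : ℝ} {g w u : 𝒜 → ℝ} (hw : ∀ a, 0 < w a)
    (hw1 : ∑ a, w a = 1) (hg : ∀ a, 0 ≤ g a ∧ g a ≤ H) (hu1 : ∑ a, u a = 1) :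
    α * ∑ a, g a * (u a - w a) ≤
      ∑ a, u a * Real.log (ewUpdate α g w a) - ∑ a, u a * Real.log (w a) +
        (1 / 2) * α ^ 2 * H ^ 2 := by
  have hlog := log_normaliser_le (α := α) hw hw1 hg
  set Z := ∑ b, w b * Real.exp (α * g b) with hZdef
  have hZ : 0 < Z := normaliser_pos hw
  have h1 : ∑ a, u a * Real.log (ewUpdate α g w a) =
      ∑ a, u a * Real.log (w a) + α * (∑ a, u a * g a) - Real.log Z := by
    have : ∀ a, u a * Real.log (ewUpdate α g w a) =
        u a * Real.log (w a) + α * (u a * g a) - u a * Real.log Z := by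
      intro a
      simp only [ewUpdate]
      rw [← hZdef, Real.log_div (mul_pos (hw a) (Real.exp_pos _)).ne' hZ.ne',
        Real.log_mul (hw a).ne' (Real.exp_pos _).ne', Real.log_exp]
      ring
    simp only [this, Finset.sum_sub_distrib, Finset.sum_add_distrib, ← Finset.sum_mul,
      ← Finset.mul_sum, hu1, one_mul]
  have h2 : ∑ a, g a * (u a - w a) = ∑ a, u a * g a - ∑ a, w a * g a := by
    rw [← Finset.sum_sub_distrib]
    exact Finset.sum_congr rfl fun a _ => by ring
  rw [h1, h2]
  linarith

lemma ewIter_pmf [Nonempty 𝒜] (α : ℝ) (g : ℕ → 𝒜 → ℝ) (i : ℕ) :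
    (∀ a, 0 < ewIter α g i a) ∧ ∑ a, ewIter α g i a = 1 := by
  induction i with
  | zero =>
    have hc : (0 : ℝ) < Fintype.card 𝒜 := by exact_mod_cast Fintype.card_pos
    exact ⟨fun a => by simp only [ewIter]; positivity, by simp [ewIter, hc.ne']⟩
  | succ i ih => exact ⟨ewUpdate_pos ih.1, sum_ewUpdate ih.1⟩

/-- Regret of exponential weights over `n` steps against a fixed comparator `u`. -/
lemma static_regret [Nonempty 𝒜] {α H : ℝ} (hα : 0 < α) (g : ℕ → 𝒜 → ℝ) (n : ℕ)
    (hg : ∀ i < n, ∀ a, 0 ≤ g i a ∧ g i a ≤ H) {u : 𝒜 → ℝ} (hu : ∀ a, 0 ≤ u a)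
    (hu1 : ∑ a, u a = 1) :
    ∑ i ∈ Finset.range n, ∑ a, g i a * (u a - ewIter α g i a) ≤
      (1 / 2) * α * n * H ^ 2 + Real.log (Fintype.card 𝒜) / α := by
  set V : ℕ → ℝ := fun i => ∑ a, u a * Real.log (ewIter α g i a) with hV
  have hsum : α * ∑ i ∈ Finset.range n, ∑ a, g i a * (u a - ewIter α g i a) ≤
      V n - V 0 + n * ((1 / 2) * α ^ 2 * H ^ 2) := by
    rw [Finset.mul_sum]
    calc _ ≤ ∑ i ∈ Finset.range n, (V (i + 1) - V i + (1 / 2) * α ^ 2 * H ^ 2) :=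
          Finset.sum_le_sum fun i hi =>
            one_step_regret (ewIter_pmf α g i).1 (ewIter_pmf α g i).2
              (hg i (Finset.mem_range.1 hi)) hu1
      _ = _ := by
          rw [Finset.sum_add_distrib, Finset.sum_range_sub, Finset.sum_const, Finset.card_range,
            nsmul_eq_mul]
  have hVn : V n ≤ 0 := by
    refine Finset.sum_nonpos fun a _ => mul_nonpos_of_nonneg_of_nonpos (hu a) ?_
    obtain ⟨hpos, hone⟩ := ewIter_pmf α g n
    refine Real.log_nonpos (hpos a).le ?_
    rw [← hone]
    exact Finset.single_le_sum (fun b _ => (hpos b).le) (Finset.mem_univ a)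
  have hV0 : V 0 = -Real.log (Fintype.card 𝒜) := by
    simp [hV, ewIter, ← Finset.sum_mul, hu1]
  rw [← mul_le_mul_iff_right₀ hα]
  have : α * ((1 / 2) * α * n * H ^ 2 + Real.log (Fintype.card 𝒜) / α) =
      n * ((1 / 2) * α ^ 2 * H ^ 2) + Real.log (Fintype.card 𝒜) := by
    field_simp
  rw [this]
  linarith

lemma drift_le (q : ℕ → 𝒜 → ℝ) (c i : ℕ) :
    ∑ a, |q (c + i + 1) a - q (c + 1) a| ≤
      ∑ j ∈ Finset.range (i + 1), ∑ a, |q (c + j + 1) a - q (c + j) a| := by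
  induction i with
  | zero => simpa using Finset.sum_nonneg fun a _ => abs_nonneg (q (c + 1) a - q c a)
  | succ i ih =>
    rw [Finset.sum_range_succ]
    refine le_trans ?_ (add_le_add_left ih _)
    rw [← Finset.sum_add_distrib]
    refine Finset.sum_le_sum fun a _ => ?_
    rw [add_comm |_| |_|]
    exact abs_sub_le _ _ _

/-- The dynamic regret bound over a single period, which starts at time `c + 1`. -/
lemma period_regret [Nonempty 𝒜] {α H : ℝ} (hα : 0 < α) (hH : 0 ≤ H) (c τ : ℕ)
    (Q p q : ℕ → 𝒜 → ℝ)
    (hQ : ∀ i < τ, ∀ a, 0 ≤ Q (c + i + 1) a ∧ Q (c + i + 1) a ≤ H)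
    (hp : ∀ i < τ, p (c + i + 1) = ewIter α (fun i => Q (c + i + 1)) i)
    (hq : ∀ a, 0 ≤ q (c + 1) a) (hq1 : ∑ a, q (c + 1) a = 1) :
    ∑ i ∈ Finset.range τ, ∑ a, Q (c + i + 1) a * (q (c + i + 1) a - p (c + i + 1) a) ≤
      (1 / 2) * α * τ * H ^ 2 + Real.log (Fintype.card 𝒜) / α +
        τ * H * ∑ i ∈ Finset.range τ, ∑ a, |q (c + i + 1) a - q (c + i) a| := by
  have hstat := static_regret hα (fun i => Q (c + i + 1)) τ hQ hq hq1
  set D := ∑ i ∈ Finset.range τ, ∑ a, |q (c + i + 1) a - q (c + i) a|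
  have hstep : ∀ i ∈ Finset.range τ,
      ∑ a, Q (c + i + 1) a * (q (c + i + 1) a - p (c + i + 1) a) ≤
        ∑ a, Q (c + i + 1) a * (q (c + 1) a - ewIter α (fun i => Q (c + i + 1)) i a) +
          H * D := by
    intro i hi
    have hi' := Finset.mem_range.1 hi
    have h1 : ∑ a, |q (c + i + 1) a - q (c + 1) a| ≤ D :=
      (drift_le q c i).trans (Finset.sum_le_sum_of_subset_of_nonneg
        (Finset.range_mono hi') fun _ _ _ => Finset.sum_nonneg fun _ _ => abs_nonneg _)
    refine le_trans ?_ (add_le_add_right (mul_le_mul_of_nonneg_left h1 hH) _)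
    rw [Finset.mul_sum, ← Finset.sum_add_distrib, hp i hi']
    refine Finset.sum_le_sum fun a _ => ?_
    have h2 : Q (c + i + 1) a * (q (c + i + 1) a - q (c + 1) a) ≤
        H * |q (c + i + 1) a - q (c + 1) a| :=
      (mul_le_mul_of_nonneg_left (le_abs_self _) (hQ i hi' a).1).trans
        (mul_le_mul_of_nonneg_right (hQ i hi' a).2 (abs_nonneg _))
    linarith
  refine (Finset.sum_le_sum hstep).trans ?_
  rw [Finset.sum_add_distrib, Finset.sum_const, Finset.card_range, nsmul_eq_mul]
  linarith

end

lemma sum_range_mul_eq (f : ℕ → ℝ) (L τ : ℕ) :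
    ∑ k ∈ Finset.range (L * τ), f k =
      ∑ l ∈ Finset.range L, ∑ i ∈ Finset.range τ, f (l * τ + i) := by
  induction L with
  | zero => simp
  | succ L ih => rw [Nat.succ_mul, Finset.sum_range_add, ih, Finset.sum_range_succ]

lemma sum_Icc_periods (f : ℕ → ℝ) (L τ : ℕ) :
    ∑ k ∈ Finset.Icc 1 (L * τ), f k =
      ∑ l ∈ Finset.range L, ∑ i ∈ Finset.range τ, f (l * τ + i + 1) := by
  rw [← sum_range_mul_eq (fun k => f (k + 1)), Finset.range_eq_Ico, Finset.sum_Ico_add' f 0 _ 1]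
  rfl

/-- Dynamic regret bound for exponential weights with periodic restarts
(Lemma on performance difference with fixed expectation, abstract form). -/
theorem restarted_exp_weights_dynamic_regret {𝒜 : Type*} [Fintype 𝒜] [Nonempty 𝒜]
    (A : ℕ) (hA : Fintype.card 𝒜 = A)
    (H α : ℝ) (hH : 0 ≤ H) (hα : 0 < α)
    (τ L K : ℕ) (hτ : 0 < τ) (hL : 0 < L) (hK : K = L * τ)
    (Q : ℕ → 𝒜 → ℝ)
    (hQ : ∀ k ∈ Finset.Icc 1 K, ∀ a, 0 ≤ Q k a ∧ Q k a ≤ H)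
    (p : ℕ → 𝒜 → ℝ)
    (hreset : ∀ l ∈ Finset.Icc 1 L, ∀ a, p ((l - 1) * τ + 1) a = 1 / (A : ℝ))
    (hrec : ∀ l ∈ Finset.Icc 1 L, ∀ k, (l - 1) * τ + 1 ≤ k → k ≤ l * τ - 1 →
      ∀ a, p (k + 1) a =
        p k a * Real.exp (α * Q k a) / ∑ b, p k b * Real.exp (α * Q k b))
    (q : ℕ → 𝒜 → ℝ)
    (hq : ∀ k ∈ Finset.Icc 1 K, (∀ a, 0 ≤ q k a) ∧ ∑ a, q k a = 1)
    (hq0 : q 0 = q 1) :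
    ∑ k ∈ Finset.Icc 1 K, ∑ a, Q k a * (q k a - p k a) ≤
      (1 / 2) * α * K * H ^ 2 + L * Real.log A / α +
        τ * H * ∑ k ∈ Finset.Icc 1 K, ∑ a, |q k a - q (k - 1) a| := by
  subst hA hK
  -- `l` counts periods from `0` here, so period `l` is the period `l + 1` of the hypotheses.
  have hmem : ∀ l < L, ∀ i < τ, l * τ + i + 1 ∈ Finset.Icc 1 (L * τ) := by
    intro l hl i hi
    have : (l + 1) * τ ≤ L * τ := Nat.mul_le_mul_right τ hl
    rw [Nat.succ_mul] at this
    rw [Finset.mem_Icc]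
    omega
  have hp : ∀ l < L, ∀ i < τ,
      p (l * τ + i + 1) = ewIter α (fun i => Q (l * τ + i + 1)) i := by
    intro l hl i
    have hl' : l + 1 ∈ Finset.Icc 1 L := Finset.mem_Icc.2 ⟨by omega, hl⟩
    induction i with
    | zero =>
      intro _
      funext a
      simpa [ewIter] using hreset (l + 1) hl' a
    | succ i ih =>
      intro hi
      funext a
      have h := hrec (l + 1) hl' (l * τ + i + 1) (by simp)
        (by rw [Nat.succ_mul]; omega) a
      rw [ih (by omega)] at h
      exact h
  have hper : ∀ l ∈ Finset.range L, _ := fun l hl =>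
    have hl' := Finset.mem_range.1 hl
    period_regret hα hH (l * τ) τ Q p q (fun i hi => hQ _ (hmem l hl' i hi)) (hp l hl')
      (hq _ (hmem l hl' 0 hτ)).1 (hq _ (hmem l hl' 0 hτ)).2
  rw [sum_Icc_periods, sum_Icc_periods]
  refine (Finset.sum_le_sum hper).trans (le_of_eq ?_)
  rw [Finset.sum_add_distrib, ← Finset.mul_sum, Finset.sum_const, Finset.card_range, nsmul_eq_mul]
  simp only [Nat.add_sub_cancel]
  push_cast
  ring
end

section
/- Let S be a nonempty finite set, n a positive integer, and let A₁,…,A_n and B₁,…,B_n be row-stochastic matrices over S. Then max_{s∈S} Σ_{s'∈S} |(A₁A₂⋯A_n)(s, s') − (B₁B₂⋯B_n)(s, s')| ≤ Σ_{i=1}^{n} max_{u∈S} Σ_{v∈S} |A_i(u, v) − B_i(u, v)|. -/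
/-!
Peeling off the first factors gives `A P - B Q = A (P - Q) + (A - B) Q`. Left multiplication by a
row-stochastic `A` averages the rows of `P - Q`, so it does not increase the largest row `ℓ¹` norm;
right multiplication by a row-stochastic `Q` does not increase the `ℓ¹` norm of any row of `A - B`.
Hence each factor adds at most its own row distance (`sum_abs_mul_sub_mul_le`), and induction on
the number of factors sums these contributions. That `Q`, itself a product, is row-stochastic holds
because `Matrix.rowStochastic` is a submonoid.
-/

theorem sum_abs_mul_sub_mul_le {S : Type*} [Fintype S] [DecidableEq S]
    {A B P Q : Matrix S S ℝ} (hA : A ∈ Matrix.rowStochastic ℝ S)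
    (hQ : Q ∈ Matrix.rowStochastic ℝ S) {c d : ℝ}
    (hAB : ∀ u, ∑ v, |A u v - B u v| ≤ c) (hPQ : ∀ u, ∑ v, |P u v - Q u v| ≤ d) (s : S) :
    ∑ s', |(A * P) s s' - (B * Q) s s'| ≤ c + d := by
  rw [Matrix.mem_rowStochastic_iff_sum] at hA hQ
  calc ∑ s', |(A * P) s s' - (B * Q) s s'|
      ≤ ∑ s', ∑ u, (|A s u - B s u| * Q u s' + A s u * |P u s' - Q u s'|) := by
        refine Finset.sum_le_sum fun s' _ => ?_
        rw [Matrix.mul_apply, Matrix.mul_apply, ← Finset.sum_sub_distrib]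
        refine (Finset.abs_sum_le_sum_abs _ _).trans (Finset.sum_le_sum fun u _ => ?_)
        calc |A s u * P u s' - B s u * Q u s'|
            = |(A s u - B s u) * Q u s' + A s u * (P u s' - Q u s')| := by ring_nf
          _ ≤ |(A s u - B s u) * Q u s'| + |A s u * (P u s' - Q u s')| := abs_add_le _ _
          _ = _ := by rw [abs_mul, abs_mul, abs_of_nonneg (hQ.1 u s'), abs_of_nonneg (hA.1 s u)]
    _ = ∑ u, |A s u - B s u| + ∑ u, A s u * ∑ s', |P u s' - Q u s'| := by
        rw [Finset.sum_comm]
        simp_rw [Finset.sum_add_distrib, ← Finset.mul_sum, hQ.2, mul_one]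
    _ ≤ c + ∑ u, A s u * d := by
        gcongr with u
        · exact hAB s
        · exact hA.1 s u
        · exact hPQ u
    _ = c + d := by rw [← Finset.sum_mul, hA.2, one_mul]

theorem sum_abs_prod_ofFn_sub_le {S : Type*} [Fintype S] [DecidableEq S] {n : ℕ}
    (A B : Fin n → Matrix S S ℝ) (hA : ∀ i, A i ∈ Matrix.rowStochastic ℝ S)
    (hB : ∀ i, B i ∈ Matrix.rowStochastic ℝ S) (c : Fin n → ℝ)
    (hc : ∀ i u, ∑ v, |A i u v - B i u v| ≤ c i) (s : S) :
    ∑ s', |(List.ofFn A).prod s s' - (List.ofFn B).prod s s'| ≤ ∑ i, c i := by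
  induction n generalizing s with
  | zero => simp
  | succ n ih =>
    rw [List.ofFn_succ, List.ofFn_succ, List.prod_cons, List.prod_cons, Fin.sum_univ_succ]
    refine sum_abs_mul_sub_mul_le (hA 0) (Submonoid.list_prod_mem _ ?_) (hc 0)
      (fun u => ih _ _ (fun i => hA i.succ) (fun i => hB i.succ) _ (fun i => hc i.succ) u) s
    rw [List.forall_mem_ofFn_iff]
    exact fun i => hB i.succ


/-- Telescoping bound on the row-wise ℓ¹ distance between products of
row-stochastic matrices. -/
theorem stochastic_matrix_product_l1_telescope
    {S : Type*} [Fintype S] [Nonempty S] [DecidableEq S]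
    (n : ℕ) (hn : 0 < n)
    (A B : Fin n → Matrix S S ℝ)
    (hA_nonneg : ∀ i, ∀ s s', 0 ≤ A i s s')
    (hA_row : ∀ i, ∀ s, ∑ s', A i s s' = 1)
    (hB_nonneg : ∀ i, ∀ s s', 0 ≤ B i s s')
    (hB_row : ∀ i, ∀ s, ∑ s', B i s s' = 1) :
    Finset.univ.sup' Finset.univ_nonempty
        (fun s => ∑ s', |(List.ofFn A).prod s s' - (List.ofFn B).prod s s'|) ≤
      ∑ i, Finset.univ.sup' Finset.univ_nonempty
        (fun u => ∑ v, |A i u v - B i u v|) := by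
  refine Finset.sup'_le _ _ fun s _ => sum_abs_prod_ofFn_sub_le A B
    (fun i => Matrix.mem_rowStochastic_iff_sum.2 ⟨hA_nonneg i, hA_row i⟩)
    (fun i => Matrix.mem_rowStochastic_iff_sum.2 ⟨hB_nonneg i, hB_row i⟩) _ (fun i u => ?_) s
  exact Finset.le_sup' (fun u => ∑ v, |A i u v - B i u v|) (Finset.mem_univ u)
end

section
/- Let d, t be positive integers and let φ₁,…,φ_t ∈ ℝ^d satisfy ‖φ_i‖₂ ≤ 1 for all i ∈ [t]. Let Λ₀ ∈ ℝ^{d×d} be a symmetric positive definite matrix whose smallest eigenvalue is at least 1, and for k ≥ 1 define Λ_k = Λ₀ + Σ_{i=1}^{k−1} φ_i φ_iᵀ. Then log(det(Λ_{t+1})/det(Λ₀)) ≤ Σ_{i=1}^{t} φ_iᵀ Λ_i^{−1} φ_i ≤ 2·log(det(Λ_{t+1})/det(Λ₀)). -/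
/-!
By the matrix determinant lemma, with `x_k = φ_kᵀ Λ_k⁻¹ φ_k` one has
`det Λ_{k+1} = det Λ_k * (1 + x_k)`, so `log (det Λ_{t+1} / det Λ₀)` telescopes to
`∑ log (1 + x_k)`. Since `Λ_k` dominates the identity and `‖φ_k‖ ≤ 1`, Cauchy–Schwarz gives
`0 ≤ x_k ≤ 1`, and on this range `log (1 + x) ≤ x ≤ 2 * log (1 + x)`.
-/

open Matrix

/-- A Hermitian matrix whose eigenvalues are all at least `1` dominates the identity in the
Loewner order. -/
lemma posSemidef_sub_one_of_one_le_eigenvalues {d : ℕ} {A : Matrix (Fin d) (Fin d) ℝ}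
    (hA : A.IsHermitian) (h : ∀ i, 1 ≤ hA.eigenvalues i) : (A - 1).PosSemidef := by
  have key : A - 1 = Unitary.conjStarAlgAut ℝ _ hA.eigenvectorUnitary
      (diagonal (fun i => hA.eigenvalues i - 1)) := by
    have hdiag : (diagonal (fun i => hA.eigenvalues i - 1) : Matrix (Fin d) (Fin d) ℝ)
        = diagonal (RCLike.ofReal ∘ hA.eigenvalues) - 1 := by
      rw [← diagonal_one, diagonal_sub]
      rfl
    rw [hdiag, map_sub, map_one, ← hA.spectral_theorem]
  rw [key]
  simp [Unitary.isUnit_coe.posSemidef_star_right_conjugate_iff, posSemidef_diagonal_iff, h]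

lemma det_add_vecMulVec_self {d : ℕ} {M : Matrix (Fin d) (Fin d) ℝ} (hM : M.PosDef)
    (v : Fin d → ℝ) :
    (M + vecMulVec v v).det = M.det * (1 + v ⬝ᵥ (M⁻¹ *ᵥ v)) := by
  have hu : IsUnit M.det := (isUnit_iff_isUnit_det M).1 hM.isUnit
  rw [vecMulVec_eq Unit, det_add_replicateCol_mul_replicateRow hu, Matrix.mul_assoc,
    ← replicateCol_mulVec]
  simp

lemma quadForm_inv_nonneg {d : ℕ} {M : Matrix (Fin d) (Fin d) ℝ} (hM : M.PosDef)
    (v : Fin d → ℝ) : 0 ≤ v ⬝ᵥ (M⁻¹ *ᵥ v) := by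
  simpa using hM.inv.posSemidef.dotProduct_mulVec_nonneg v

/-- With `y = M⁻¹ v`, the quantity `x = vᵀ M⁻¹ v = v · y = yᵀ M y` satisfies
`x² ≤ ‖v‖² ‖y‖² ≤ ‖y‖² ≤ x`, by Cauchy–Schwarz and `1 ≤ M`. -/
lemma quadForm_inv_le_one {d : ℕ} {M : Matrix (Fin d) (Fin d) ℝ} (hM : M.PosDef)
    (hM1 : (M - 1).PosSemidef) (v : Fin d → ℝ) (hv : ∑ j, v j ^ 2 ≤ 1) :
    v ⬝ᵥ (M⁻¹ *ᵥ v) ≤ 1 := by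
  have hu : IsUnit M.det := (isUnit_iff_isUnit_det M).1 hM.isUnit
  set y := M⁻¹ *ᵥ v with hy
  have hMy : M *ᵥ y = v := by
    rw [hy, mulVec_mulVec, mul_nonsing_inv _ hu, one_mulVec]
  have h1 : ∑ j, y j ^ 2 ≤ v ⬝ᵥ y := by
    have h := hM1.dotProduct_mulVec_nonneg y
    rw [sub_mulVec, hMy, one_mulVec, dotProduct_sub, star_trivial, dotProduct_comm y v] at h
    have h2 : y ⬝ᵥ y = ∑ j, y j ^ 2 := by simp [dotProduct, sq]
    linarith
  have hcs : (v ⬝ᵥ y) ^ 2 ≤ (∑ j, v j ^ 2) * ∑ j, y j ^ 2 :=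
    Finset.sum_mul_sq_le_sq_mul_sq _ _ _
  have hy0 : 0 ≤ ∑ j, y j ^ 2 := Finset.sum_nonneg fun j _ => sq_nonneg _
  nlinarith [mul_le_mul_of_nonneg_right hv hy0]

lemma le_two_mul_log_one_add {x : ℝ} (h0 : 0 ≤ x) (h1 : x ≤ 1) :
    x ≤ 2 * Real.log (1 + x) := by
  have h := Real.le_log_one_add_of_nonneg h0
  have h2 : x / 2 ≤ 2 * x / (x + 2) := by
    rw [div_le_div_iff₀ (by norm_num) (by linarith)]
    nlinarith
  linarith

/-- Elliptical potential lemma (Lemma D.6 of Cai et al. / Lemma D.2 of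
Jin et al.): the sum of the quadratic forms `φᵢᵀ Λᵢ⁻¹ φᵢ` is sandwiched
between the log-determinant ratio and twice the log-determinant ratio. -/
theorem elliptical_potential
    (d t : ℕ) (hd : 0 < d) (ht : 0 < t)
    (φ : ℕ → Fin d → ℝ)
    (hφ : ∀ i ∈ Finset.Icc 1 t, Real.sqrt (∑ j, φ i j ^ 2) ≤ 1)
    (Λ₀ : Matrix (Fin d) (Fin d) ℝ)
    (hΛ₀ : Λ₀.PosDef)
    (heig : ∀ i, 1 ≤ hΛ₀.isHermitian.eigenvalues i)
    (Λ : ℕ → Matrix (Fin d) (Fin d) ℝ)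
    (hΛ : ∀ k, 1 ≤ k →
      Λ k = Λ₀ + ∑ i ∈ Finset.Icc 1 (k - 1), vecMulVec (φ i) (φ i)) :
    Real.log ((Λ (t + 1)).det / Λ₀.det) ≤
        ∑ i ∈ Finset.Icc 1 t, φ i ⬝ᵥ ((Λ i)⁻¹ *ᵥ φ i) ∧
      ∑ i ∈ Finset.Icc 1 t, φ i ⬝ᵥ ((Λ i)⁻¹ *ᵥ φ i) ≤
        2 * Real.log ((Λ (t + 1)).det / Λ₀.det) := by
  have hsum (k : ℕ) : (∑ i ∈ Finset.Icc 1 k, vecMulVec (φ i) (φ i)).PosSemidef :=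
    posSemidef_sum _ fun i _ => by simpa using posSemidef_vecMulVec_self_star (φ i)
  have hpd (k : ℕ) (hk : 1 ≤ k) : (Λ k).PosDef := by
    rw [hΛ k hk]
    exact hΛ₀.add_posSemidef (hsum _)
  have hge (k : ℕ) (hk : 1 ≤ k) : (Λ k - 1).PosSemidef := by
    rw [hΛ k hk, add_sub_right_comm]
    exact (posSemidef_sub_one_of_one_le_eigenvalues _ heig).add (hsum _)
  have hone : Λ 1 = Λ₀ := by simp [hΛ 1 le_rfl]
  have hstep (k : ℕ) (hk : 1 ≤ k) : Λ (k + 1) = Λ k + vecMulVec (φ k) (φ k) := by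
    obtain ⟨m, rfl⟩ := Nat.exists_eq_add_of_le' hk
    rw [hΛ _ hk, hΛ _ (by omega), Nat.add_sub_cancel, Nat.add_sub_cancel,
      Finset.sum_Icc_succ_top (by omega), add_assoc]
  have htele (n : ℕ) : Real.log ((Λ (n + 1)).det / Λ₀.det) =
      ∑ i ∈ Finset.Icc 1 n, Real.log (1 + φ i ⬝ᵥ ((Λ i)⁻¹ *ᵥ φ i)) := by
    induction n with
    | zero => simp [hone, hΛ₀.det_pos.ne']
    | succ n ih =>
      have hp := hpd (n + 1) (by omega)
      have hx := quadForm_inv_nonneg hp (φ (n + 1))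
      rw [Finset.sum_Icc_succ_top (by omega), ← ih, hstep (n + 1) (by omega),
        det_add_vecMulVec_self hp, mul_div_right_comm,
        Real.log_mul (div_pos hp.det_pos hΛ₀.det_pos).ne' (by linarith)]
  rw [htele t, Finset.mul_sum]
  constructor
  · refine Finset.sum_le_sum fun i hi => ?_
    have hx := quadForm_inv_nonneg (hpd i (Finset.mem_Icc.1 hi).1) (φ i)
    linarith [Real.log_le_sub_one_of_pos (show 0 < 1 + φ i ⬝ᵥ ((Λ i)⁻¹ *ᵥ φ i) by linarith)]
  · refine Finset.sum_le_sum fun i hi => ?_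
    have hi1 := (Finset.mem_Icc.1 hi).1
    have hv : ∑ j, φ i j ^ 2 ≤ 1 := by simpa using Real.sqrt_le_iff.1 (hφ i hi)
    exact le_two_mul_log_one_add (quadForm_inv_nonneg (hpd i hi1) _)
      (quadForm_inv_le_one (hpd i hi1) (hge i hi1) _ hv)
end

section
/- Let 𝒜 be a nonempty finite set of size A, H ≥ 0 a real number, α > 0, and τ a positive integer. Let Q⁰ ≡ 0 and let Q¹,…,Q^τ : 𝒜 → ℝ satisfy 0 ≤ Q^k(a) ≤ H for all k ∈ [τ], a ∈ 𝒜. Define the optimistic exponential-weights iterates π⁰, π¹,…,π^τ by π⁰ = uniform pmf on 𝒜 and, for k ∈ [τ], π^k(a) = exp(α·(Σ_{t=1}^{k−1} Q^t(a) + Q^{k−1}(a))) / Σ_{b∈𝒜} exp(α·(Σ_{t=1}^{k−1} Q^t(b) + Q^{k−1}(b))). Then for every pmf ν on 𝒜, Σ_{k=1}^{τ} Σ_{a∈𝒜} Q^k(a)·(ν(a) − π^k(a)) ≤ (log A)/α + α·Σ_{k=1}^{τ} (max_{a∈𝒜} |Q^k(a) − Q^{k−1}(a)|)² − (1/(8α))·Σ_{k=1}^{τ}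 ‖π^k − π^{k−1}‖₁². -/
/-!
Write `L k = ∑_{t ≤ k} Q t`, let `softmax u ∝ exp u`, let `lse u = log ∑ exp u`, and put
`g k = softmax (α L k)`, the (non-optimistic) exponential-weights iterate which has already seen
`Q k`. The potential `lse (α L k)` starts at `log A` and ends above `α ⟨ν, L τ⟩`, so it suffices to
bound its increments in terms of `α ⟨π k, Q k⟩`.

The relative entropy between two softmax distributions is
`⟨softmax u, u - v⟩ - lse u + lse v`, and Pinsker's inequality (`pinsker_softmax`) bounds it below
by `½ ‖softmax u - softmax v‖₁²`. Adding this for the pairs `(g k, π k)` and `(π k, g (k-1))` gives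
`½ (x k² + y k²) ≤ α ⟨π k, Q k⟩ - lse (α L k) + lse (α L (k-1)) + α δ k x k`
with `x k = ‖g k - π k‖₁`, `y k = ‖π k - g (k-1)‖₁`, `δ k = ‖Q k - Q (k-1)‖_∞` (`step_bound`).
Young's inequality `α δ x ≤ α² δ² + x²/4` leaves `¼ x k² + ½ y k²`. Since
`‖π k - π (k-1)‖₁² ≤ 2 (y k² + x (k-1)²)`, carrying the surplus `¼ x k²` over to the next round
pays for the negative movement term; this is the induction in the theorem.

Pinsker's inequality itself follows from the scalar bound
`x log x - x + 1 ≥ 3 (x - 1)² / (2 (x + 2))` (`rational_le_log`) and Cauchy–Schwarz with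
weights `p + 2 q`.
-/

open Finset

/-- The function `log x - (5x² - 4x - 1)/(2x² + 4x)` has derivative `(x - 1)³ / (x² (x + 2)²)`,
hence its minimum over `(0, ∞)`, namely `0`, is attained at `x = 1`. -/
lemma rational_le_log {x : ℝ} (hx : 0 < x) :
    (5 * x ^ 2 - 4 * x - 1) / (2 * x ^ 2 + 4 * x) ≤ Real.log x := by
  set F : ℝ → ℝ := fun x => Real.log x - (5 * x ^ 2 - 4 * x - 1) / (2 * x ^ 2 + 4 * x) with hF
  have hd : ∀ y : ℝ, 0 < y → HasDerivAt F ((y - 1) ^ 3 / (y ^ 2 * (y + 2) ^ 2)) y := by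
    intro y hy
    have hne : 2 * y ^ 2 + 4 * y ≠ 0 := by positivity
    have h1 : HasDerivAt (fun x : ℝ => 5 * x ^ 2 - 4 * x - 1) (5 * (2 * y) - 4) y := by
      have := (((hasDerivAt_pow 2 y).const_mul 5).sub ((hasDerivAt_id y).const_mul 4)).sub_const 1
      exact this.congr_deriv (by norm_num)
    have h2 : HasDerivAt (fun x : ℝ => 2 * x ^ 2 + 4 * x) (2 * (2 * y) + 4) y := by
      have := ((hasDerivAt_pow 2 y).const_mul 2).add ((hasDerivAt_id y).const_mul 4)
      exact this.congr_deriv (by norm_num)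
    refine ((Real.hasDerivAt_log hy.ne').sub (h1.div h2 hne)).congr_deriv ?_
    have : y + 2 ≠ 0 := by positivity
    have e : 2 * y ^ 2 + 4 * y = 2 * y * (y + 2) := by ring
    rw [e]
    field_simp
    ring
  have hF1 : F 1 = 0 := by simp [hF]; norm_num
  suffices 0 ≤ F x by simpa [hF] using this
  rw [← hF1]
  rcases le_total x 1 with h | h
  · have : AntitoneOn F (Set.Ioc 0 1) := by
      refine antitoneOn_of_hasDerivWithinAt_nonpos (convex_Ioc 0 1)
        (fun y hy => (hd y hy.1).continuousAt.continuousWithinAt)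
        (fun y hy => (hd y (interior_subset hy).1).hasDerivWithinAt) ?_
      intro y hy
      have hy' := interior_subset hy
      refine div_nonpos_of_nonpos_of_nonneg ?_ (by positivity)
      exact Odd.pow_nonpos (by decide) (by linarith [hy'.2])
    exact this ⟨hx, h⟩ ⟨one_pos, le_rfl⟩ h
  · have : MonotoneOn F (Set.Ici 1) := by
      refine monotoneOn_of_hasDerivWithinAt_nonneg (convex_Ici 1)
        (fun y hy => (hd y (one_pos.trans_le hy)).continuousAt.continuousWithinAt)
        (fun y hy => (hd y (one_pos.trans_le (interior_subset hy))).hasDerivWithinAt) ?_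
      intro y hy
      have hy' : 1 ≤ y := interior_subset hy
      have : 0 ≤ y - 1 := by linarith
      positivity
    exact this (le_refl (1 : ℝ)) h h

/-- Pointwise form of Pinsker's inequality: `rational_le_log` at `p / q`, multiplied
by `p`. -/
lemma pinsker_pointwise {p q : ℝ} (hp : 0 < p) (hq : 0 < q) :
    p - q + 3 / 2 * (|p - q| ^ 2 / (p + 2 * q)) ≤ p * (Real.log p - Real.log q) := by
  rw [← Real.log_div hp.ne' hq.ne', sq_abs]
  refine le_trans (le_of_eq ?_) (mul_le_mul_of_nonneg_left (rational_le_log (div_pos hp hq)) hp.le)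
  have e : 2 * (p / q) ^ 2 + 4 * (p / q) = 2 * p * (p + 2 * q) / q ^ 2 := by field_simp; ring
  rw [e]
  field_simp
  ring

/-- Pinsker's inequality for strictly positive pmfs on a finite set. -/
lemma pinsker {ι : Type*} [Fintype ι] (p q : ι → ℝ) (hp : ∀ a, 0 < p a) (hq : ∀ a, 0 < q a)
    (hps : ∑ a, p a = 1) (hqs : ∑ a, q a = 1) :
    (1 / 2) * (∑ a, |p a - q a|) ^ 2 ≤ ∑ a, p a * (Real.log (p a) - Real.log (q a)) := by
  have hcs := Finset.sq_sum_div_le_sum_sq_div univ (fun a => |p a - q a|)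
    (g := fun a => p a + 2 * q a) (fun a _ => by have := hp a; have := hq a; positivity)
  have hs : ∑ a, (p a + 2 * q a) = 3 := by
    rw [sum_add_distrib, ← mul_sum, hps, hqs]; norm_num
  rw [hs] at hcs
  have h := Finset.sum_le_sum (fun a (_ : a ∈ univ) => pinsker_pointwise (hp a) (hq a))
  rw [sum_add_distrib, sum_sub_distrib, hps, hqs, ← mul_sum] at h
  linarith

/-- The log-sum-exp function (log-partition function). -/
noncomputable def lse {ι : Type*} [Fintype ι] (u : ι → ℝ) : ℝ := Real.log (∑ b, Real.exp (u b))

/-- The pmf proportional to `exp u`. -/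
noncomputable def softmax {ι : Type*} [Fintype ι] (u : ι → ℝ) (a : ι) : ℝ :=
  Real.exp (u a) / ∑ b, Real.exp (u b)

section Softmax

variable {ι : Type*} [Fintype ι] [Nonempty ι]

lemma sum_exp_pos (u : ι → ℝ) : 0 < ∑ b, Real.exp (u b) :=
  sum_pos (fun _ _ => Real.exp_pos _) univ_nonempty

lemma softmax_pos (u : ι → ℝ) (a : ι) : 0 < softmax u a :=
  div_pos (Real.exp_pos _) (sum_exp_pos u)

lemma sum_softmax (u : ι → ℝ) : ∑ a, softmax u a = 1 := by
  unfold softmax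
  rw [← sum_div, div_self (sum_exp_pos u).ne']

lemma log_softmax (u : ι → ℝ) (a : ι) : Real.log (softmax u a) = u a - lse u := by
  rw [softmax, Real.log_div (Real.exp_pos _).ne' (sum_exp_pos u).ne', Real.log_exp, lse]

lemma le_lse (u : ι → ℝ) (a : ι) : u a ≤ lse u := by
  rw [lse, Real.le_log_iff_exp_le (sum_exp_pos u)]
  exact single_le_sum (f := fun b => Real.exp (u b)) (fun _ _ => (Real.exp_pos _).le) (mem_univ a)

/-- Pinsker's inequality for softmax distributions: the right-hand side is the relative entropy
of `softmax u` with respect to `softmax v`. -/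
lemma pinsker_softmax (u v : ι → ℝ) :
    (1 / 2) * (∑ a, |softmax u a - softmax v a|) ^ 2 ≤
      ∑ a, softmax u a * (u a - v a) - lse u + lse v := by
  refine (pinsker _ _ (softmax_pos u) (softmax_pos v) (sum_softmax u) (sum_softmax v)).trans_eq ?_
  have : ∀ a, softmax u a * (Real.log (softmax u a) - Real.log (softmax v a)) =
      softmax u a * (u a - v a) - softmax u a * (lse u - lse v) := by
    intro a; rw [log_softmax, log_softmax]; ring
  simp_rw [this]
  rw [sum_sub_distrib, ← sum_mul, sum_softmax]
  ring

/-- One round of optimistic exponential weights started from cumulative payoff `L`, with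
prediction `M` and realised payoff `q`. -/
lemma step_bound (α : ℝ) (hα : 0 < α) (L M q : ι → ℝ) (δ : ℝ) (hδ : ∀ a, |q a - M a| ≤ δ) :
    (1 / 4) * (∑ a, |softmax (fun a => α * (L a + q a)) a -
          softmax (fun a => α * (L a + M a)) a|) ^ 2 +
        (1 / 2) * (∑ a, |softmax (fun a => α * (L a + M a)) a -
          softmax (fun a => α * L a) a|) ^ 2 ≤
      α * (∑ a, q a * softmax (fun a => α * (L a + M a)) a)
        - lse (fun a => α * (L a + q a)) + lse (fun a => α * L a) + α ^ 2 * δ ^ 2 := by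
  have h1 := pinsker_softmax (fun a => α * (L a + q a)) (fun a => α * (L a + M a))
  have h2 := pinsker_softmax (fun a => α * (L a + M a)) (fun a => α * L a)
  set g := softmax (fun a => α * (L a + q a))
  set p := softmax (fun a => α * (L a + M a))
  set r := softmax (fun a => α * L a)
  set x := ∑ a, |g a - p a|
  have hsum : ∑ a, g a * (α * (L a + q a) - α * (L a + M a)) +
      ∑ a, p a * (α * (L a + M a) - α * L a) =
      α * (∑ a, q a * p a) + α * ∑ a, (g a - p a) * (q a - M a) := by
    rw [mul_sum, mul_sum, ← sum_add_distrib, ← sum_add_distrib]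
    exact sum_congr rfl fun a _ => by ring
  have hholder : ∑ a, (g a - p a) * (q a - M a) ≤ x * δ := by
    rw [sum_mul]
    refine sum_le_sum fun a _ => (le_abs_self _).trans ?_
    rw [abs_mul]
    exact mul_le_mul_of_nonneg_left (hδ a) (abs_nonneg _)
  have hα' := mul_le_mul_of_nonneg_left hholder hα.le
  nlinarith [sq_nonneg (x / 2 - α * δ)]

end Softmax

/-- Regret bound for optimistic mirror descent (optimistic exponential
weights) with predictable sequence `Qᵏ⁻¹` (Proposition 5 of Syrgkanis
et al., as used in the paper). -/
theorem optimistic_exp_weights_regret {𝒜 : Type*} [Fintype 𝒜] [Nonempty 𝒜]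
    (A : ℕ) (hA : Fintype.card 𝒜 = A)
    (H α : ℝ) (hH : 0 ≤ H) (hα : 0 < α)
    (τ : ℕ) (hτ : 0 < τ)
    (Q : ℕ → 𝒜 → ℝ)
    (hQ0 : ∀ a, Q 0 a = 0)
    (hQ : ∀ k ∈ Finset.Icc 1 τ, ∀ a, 0 ≤ Q k a ∧ Q k a ≤ H)
    (π : ℕ → 𝒜 → ℝ)
    (hπ0 : ∀ a, π 0 a = 1 / (A : ℝ))
    (hπ : ∀ k ∈ Finset.Icc 1 τ, ∀ a,
      π k a =
        Real.exp (α * ((∑ t ∈ Finset.Icc 1 (k - 1), Q t a) + Q (k - 1) a)) /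
          ∑ b, Real.exp (α * ((∑ t ∈ Finset.Icc 1 (k - 1), Q t b) + Q (k - 1) b)))
    (ν : 𝒜 → ℝ) (hν_nonneg : ∀ a, 0 ≤ ν a) (hν_sum : ∑ a, ν a = 1) :
    ∑ k ∈ Finset.Icc 1 τ, ∑ a, Q k a * (ν a - π k a) ≤
      Real.log A / α +
        α * ∑ k ∈ Finset.Icc 1 τ,
          (Finset.univ.sup' Finset.univ_nonempty fun a => |Q k a - Q (k - 1) a|) ^ 2 -
        (1 / (8 * α)) * ∑ k ∈ Finset.Icc 1 τ, (∑ a, |π k a - π (k - 1) a|) ^ 2 := by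
  set L : ℕ → 𝒜 → ℝ := fun k a => ∑ t ∈ Finset.Icc 1 k, Q t a with hL
  set δ : ℕ → ℝ := fun k =>
    Finset.univ.sup' Finset.univ_nonempty fun a => |Q k a - Q (k - 1) a| with hδ
  have hLs : ∀ n a, L (n + 1) a = L n a + Q (n + 1) a := fun n a =>
    sum_Icc_succ_top (by omega) _
  -- The term `¼ ‖g n - π n‖₁²` is the surplus handed to the next round.
  have key : ∀ n ≤ τ,
      lse (fun a => α * L n a) - Real.log A
        + (1 / 8) * ∑ k ∈ Icc 1 n, (∑ a, |π k a - π (k - 1) a|) ^ 2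
        + (1 / 4) * (∑ a, |softmax (fun a => α * L n a) a - π n a|) ^ 2
      ≤ α * (∑ k ∈ Icc 1 n, ∑ a, Q k a * π k a) + α ^ 2 * ∑ k ∈ Icc 1 n, δ k ^ 2 := by
    intro n
    induction n with
    | zero =>
      intro _
      simp [hL, lse, softmax, hπ0, hA]
    | succ n ih =>
      intro hn
      have ih := ih (by omega)
      have hstep := step_bound α hα (L n) (Q n) (Q (n + 1)) (δ (n + 1)) (fun a =>
        le_sup' (fun a => |Q (n + 1) a - Q (n + 1 - 1) a|) (mem_univ a))
      have hp : softmax (fun a => α * (L n a + Q n a)) = π (n + 1) := by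
        funext a
        rw [hπ (n + 1) (by simp; omega) a]
        rfl
      simp only [← hLs] at hstep
      rw [hp] at hstep
      have htri : ∑ a, |π (n + 1) a - π n a| ≤
          ∑ a, |π (n + 1) a - softmax (fun a => α * L n a) a| +
          ∑ a, |softmax (fun a => α * L n a) a - π n a| := by
        rw [← sum_add_distrib]
        exact sum_le_sum fun a _ => abs_sub_le _ _ _
      have hd0 : 0 ≤ ∑ a, |π (n + 1) a - π n a| := sum_nonneg fun a _ => abs_nonneg _
      iterate 3 rw [sum_Icc_succ_top (by omega : 1 ≤ n + 1)]
      rw [Nat.add_sub_cancel]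
      set d := ∑ a, |π (n + 1) a - π n a|
      set y := ∑ a, |π (n + 1) a - softmax (fun a => α * L n a) a|
      set x := ∑ a, |softmax (fun a => α * L n a) a - π n a|
      have hd : d ^ 2 ≤ 2 * y ^ 2 + 2 * x ^ 2 := by
        have := pow_le_pow_left₀ hd0 htri 2
        nlinarith [sq_nonneg (y - x)]
      nlinarith [sq_nonneg y]
  have hfin := key τ le_rfl
  -- The final potential dominates the payoff of every fixed comparator.
  have hν : α * (∑ k ∈ Icc 1 τ, ∑ a, Q k a * ν a) ≤ lse (fun a => α * L τ a) := by
    calc α * (∑ k ∈ Icc 1 τ, ∑ a, Q k a * ν a) = ∑ a, ν a * (α * L τ a) := by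
          rw [sum_comm, mul_sum]
          refine sum_congr rfl fun a _ => ?_
          rw [← sum_mul]
          ring
      _ ≤ ∑ a, ν a * lse (fun a => α * L τ a) := sum_le_sum fun a _ =>
          mul_le_mul_of_nonneg_left (le_lse (fun a => α * L τ a) a) (hν_nonneg a)
      _ = lse (fun a => α * L τ a) := by rw [← sum_mul, hν_sum, one_mul]
  have hsplit : ∑ k ∈ Icc 1 τ, ∑ a, Q k a * (ν a - π k a) =
      ∑ k ∈ Icc 1 τ, ∑ a, Q k a * ν a - ∑ k ∈ Icc 1 τ, ∑ a, Q k a * π k a := by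
    simp_rw [mul_sub, sum_sub_distrib]
  rw [hsplit]
  refine le_of_mul_le_mul_left ?_ hα
  have e : ∀ S D : ℝ, α * (Real.log A / α + α * S - (1 / (8 * α)) * D) =
      Real.log A + α ^ 2 * S - (1 / 8) * D := by
    intro S D
    field_simp
  rw [e]
  nlinarith [sq_nonneg (∑ a, |softmax (fun a => α * L τ a) a - π τ a|)]
end

section
/- Let 𝒜 be a nonempty finite set of size A, H ≥ 0 a real number, α > 0, and let τ, L be positive integers with K = L·τ. Let Q¹,…,Q^K : 𝒜 → ℝ satisfy 0 ≤ Q^k(a) ≤ H for all k, a, and define the reference functions Q̃^{k−1} : 𝒜 → ℝ by Q̃^{k−1} ≡ 0 if k ≡ 1 (mod τ) and Q̃^{k−1} = Q^{k−1} otherwise. Define restarted optimistic exponential-weights iterates π¹,…,π^K as follows: for every period l ∈ [L] and every k with (l−1)τ+1 ≤ k ≤ lτ, π^k(a) = exp(α·(Σ_{t=(l−1)τ+1}^{k−1} Q^t(a) + Q̃^{k−1}(a))) / Σ_{b∈𝒜} exp(α·(Σ_{t=(l−1)τ+1}^{k−1} Q^t(b) + Q̃^{k−1}(b))) (so π^{(l−1)τ+1}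 is uniform on 𝒜). Then for every sequence of comparator pmfs q¹,…,q^K on 𝒜 (with the convention q⁰ = q¹), Σ_{k=1}^{K} Σ_{a∈𝒜} Q^k(a)·(q^k(a) − π^k(a)) ≤ L·(log A)/α + α·Σ_{k=1}^{K} (max_{a∈𝒜} |Q^k(a) − Q̃^{k−1}(a)|)² + τ·H·Σ_{k=1}^{K} ‖q^k − q^{k−1}‖₁. -/
/-!
The bound is proved period by period, with the first comparator of the period as a fixed reference.

*Static regret in a period.* Let `S` be the sum of the rewards seen so far in the period and use the
potential `Φ S = log ∑ a, exp (α * S a)`. With a prediction `m` and `π ∝ exp (α (S + m))`,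
`Φ (S + Q) - Φ S = log 𝔼_π exp (α (Q - m)) - log 𝔼_π exp (-α m)`. Hoeffding's lemma
bounds the first term by `α 𝔼_π (Q - m) + α² c² / 2` when `|Q - m| ≤ c`, and Jensen's inequality bounds
the second by `α 𝔼_π m`, so the contributions of `m` cancel (`potential_step`). Telescoping from
`Φ 0 = log A`, and using that `Φ S` dominates `α ⟨S, p⟩` for each pmf `p`, gives the static
regret bound `static_regret`.

*Drift.* Replacing the reference by the moving comparator `q^k` costs at most `H ‖q^k - q^{k₀}‖₁` per
round, where `k₀` is the first round of the period. This is at most `H` times the path length of `q`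
in the period; summing over `τ` rounds gives the factor `τ * H` (`comparator_drift`).
-/

open Finset in
lemma sum_Icc_mul_eq (f : ℕ → ℝ) (L τ : ℕ) :
    ∑ k ∈ Icc 1 (L * τ), f k = ∑ l ∈ range L, ∑ i ∈ range τ, f (l * τ + i + 1) := by
  have h : ∀ n, ∑ k ∈ Icc 1 n, f k = ∑ i ∈ range n, f (i + 1) := by
    intro n
    induction n with
    | zero => simp
    | succ n ih => rw [sum_Icc_succ_top (by omega), ih, sum_range_succ]
  rw [h]
  induction L with
  | zero => simp
  | succ L ih => rw [Nat.succ_mul, sum_range_add, ih, sum_range_succ]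

/-- Hoeffding's lemma for a pmf on a finite type, obtained from Mathlib's sub-Gaussian bound for
bounded random variables. -/
lemma hoeffding_fintype {𝒜 : Type*} [Fintype 𝒜] (p X : 𝒜 → ℝ) (c : ℝ)
    (hp : ∀ a, 0 ≤ p a) (hp1 : ∑ a, p a = 1) (hX : ∀ a, |X a| ≤ c) :
    ∑ a, p a * Real.exp (X a) ≤ Real.exp (∑ a, p a * X a + c ^ 2 / 2) := by
  let _ : MeasurableSpace 𝒜 := ⊤
  let P : PMF 𝒜 := PMF.ofFintype (fun a => ENNReal.ofReal (p a)) (by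
    rw [← ENNReal.ofReal_sum_of_nonneg (fun a _ => hp a), hp1, ENNReal.ofReal_one])
  have hint : ∀ f : 𝒜 → ℝ, ∫ a, f a ∂P.toMeasure = ∑ a, p a * f a := by
    intro f
    rw [PMF.integral_eq_sum]
    refine Finset.sum_congr rfl fun a _ => ?_
    simp [P, PMF.ofFintype_apply, ENNReal.toReal_ofReal (hp a)]
  have h := ProbabilityTheory.hasSubgaussianMGF_of_mem_Icc (μ := P.toMeasure) (X := X)
    (a := -c) (b := c) (measurable_from_top.aemeasurable)
    (Filter.Eventually.of_forall fun a => abs_le.mp (hX a))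
  have h1 := h.mgf_le 1
  rw [ProbabilityTheory.mgf, hint, hint] at h1
  have hc : ((((‖c - -c‖₊ / 2) ^ 2 : NNReal) : ℝ)) = c ^ 2 := by
    push_cast
    rw [Real.norm_eq_abs, div_pow, sq_abs]
    ring
  rw [hc] at h1
  set μ := ∑ a, p a * X a
  calc ∑ a, p a * Real.exp (X a)
      = Real.exp μ * ∑ a, p a * Real.exp (1 * (X a - μ)) := by
        rw [Finset.mul_sum]
        refine Finset.sum_congr rfl fun a _ => ?_
        rw [mul_left_comm, ← Real.exp_add]
        congr 2
        ring
    _ ≤ Real.exp μ * Real.exp (c ^ 2 * 1 ^ 2 / 2) := by gcongr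
    _ = _ := by rw [← Real.exp_add]; congr 1; ring

/-- One round of the potential argument; the prediction `m` drops out of the bound except through
its error `c`. -/
lemma potential_step {𝒜 : Type*} [Fintype 𝒜] [Nonempty 𝒜] (α c : ℝ)
    (S m Q π : 𝒜 → ℝ) (hα : 0 < α)
    (hπ : ∀ a, π a = Real.exp (α * (S a + m a)) / ∑ b, Real.exp (α * (S b + m b)))
    (hc : ∀ a, |Q a - m a| ≤ c) :
    Real.log (∑ a, Real.exp (α * (S a + Q a))) ≤
      Real.log (∑ a, Real.exp (α * S a)) + α * ∑ a, Q a * π a + α ^ 2 * c ^ 2 := by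
  set Z := ∑ b, Real.exp (α * (S b + m b)) with hZ
  have hZpos : 0 < Z := Finset.sum_pos (fun a _ => Real.exp_pos _) Finset.univ_nonempty
  have hπ0 : ∀ a, 0 ≤ π a := fun a => by rw [hπ]; positivity
  have hπ1 : ∑ a, π a = 1 := by
    simp_rw [hπ]
    rw [← Finset.sum_div, div_self hZpos.ne']
  have tilt : ∀ g : 𝒜 → ℝ, ∑ a, Real.exp (α * (S a + g a)) =
      Z * ∑ a, π a * Real.exp (α * (g a - m a)) := by
    intro g
    rw [Finset.mul_sum]
    refine Finset.sum_congr rfl fun a _ => ?_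
    rw [hπ, ← mul_assoc, mul_div_cancel₀ _ hZpos.ne', ← Real.exp_add]
    congr 1
    ring
  have hup : ∑ a, Real.exp (α * (S a + Q a)) ≤
      Z * Real.exp (∑ a, π a * (α * (Q a - m a)) + (α * c) ^ 2 / 2) := by
    rw [tilt]
    refine mul_le_mul_of_nonneg_left (hoeffding_fintype π _ _ hπ0 hπ1 fun a => ?_) hZpos.le
    rw [abs_mul, abs_of_pos hα]
    exact mul_le_mul_of_nonneg_left (hc a) hα.le
  have hlow : Z * Real.exp (∑ a, π a * (α * (0 - m a))) ≤ ∑ a, Real.exp (α * S a) := by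
    have h := tilt fun _ => 0
    simp only [add_zero] at h
    rw [h]
    refine mul_le_mul_of_nonneg_left ?_ hZpos.le
    have := convexOn_exp.map_sum_le (t := Finset.univ) (w := π)
      (p := fun a => α * (0 - m a)) (fun a _ => hπ0 a) hπ1 (fun _ _ => Set.mem_univ _)
    simpa only [smul_eq_mul] using this
  have hup' := Real.log_le_log
    (Finset.sum_pos (fun a _ => Real.exp_pos _) Finset.univ_nonempty) hup
  have hlow' := Real.log_le_log (mul_pos hZpos (Real.exp_pos _)) hlow
  rw [Real.log_mul hZpos.ne' (Real.exp_pos _).ne', Real.log_exp] at hup' hlow'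
  have hsplit : ∑ a, π a * (α * (Q a - m a)) =
      ∑ a, π a * (α * (0 - m a)) + α * ∑ a, Q a * π a := by
    rw [Finset.mul_sum, ← Finset.sum_add_distrib]
    exact Finset.sum_congr rfl fun a _ => by ring
  nlinarith [sq_nonneg (α * c)]

lemma avg_le_log_sum_exp {𝒜 : Type*} [Fintype 𝒜] (p x : 𝒜 → ℝ)
    (hp : ∀ a, 0 ≤ p a) (hp1 : ∑ a, p a = 1) :
    ∑ a, p a * x a ≤ Real.log (∑ a, Real.exp (x a)) := by
  calc ∑ a, p a * x a ≤ ∑ a, p a * Real.log (∑ a, Real.exp (x a)) := by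
        refine Finset.sum_le_sum fun a _ => mul_le_mul_of_nonneg_left ?_ (hp a)
        have h : Real.exp (x a) ≤ ∑ a, Real.exp (x a) :=
          Finset.single_le_sum (f := fun a => Real.exp (x a))
            (fun b _ => (Real.exp_pos _).le) (Finset.mem_univ a)
        simpa using Real.log_le_log (Real.exp_pos _) h
    _ = _ := by rw [← Finset.sum_mul, hp1, one_mul]

/-- Regret of optimistic exponential weights over `n` rounds against a fixed pmf `p`. -/
lemma static_regret_s13 {𝒜 : Type*} [Fintype 𝒜] [Nonempty 𝒜] (α : ℝ) (hα : 0 < α) (n : ℕ)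
    (Q m π : ℕ → 𝒜 → ℝ) (c : ℕ → ℝ) (p : 𝒜 → ℝ)
    (hπ : ∀ i < n, ∀ a, π i a = Real.exp (α * ((∑ t ∈ Finset.range i, Q t a) + m i a)) /
      ∑ b, Real.exp (α * ((∑ t ∈ Finset.range i, Q t b) + m i b)))
    (hc : ∀ i < n, ∀ a, |Q i a - m i a| ≤ c i)
    (hp : ∀ a, 0 ≤ p a) (hp1 : ∑ a, p a = 1) :
    ∑ i ∈ Finset.range n, ∑ a, Q i a * (p a - π i a) ≤
      Real.log (Fintype.card 𝒜) / α + α * ∑ i ∈ Finset.range n, c i ^ 2 := by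
  have key : ∀ j ≤ n, Real.log (∑ a, Real.exp (α * ∑ t ∈ Finset.range j, Q t a)) ≤
      Real.log (Fintype.card 𝒜) + α * (∑ i ∈ Finset.range j, ∑ a, Q i a * π i a) +
        α ^ 2 * ∑ i ∈ Finset.range j, c i ^ 2 := by
    intro j
    induction j with
    | zero => simp
    | succ j ih =>
      intro hj
      have h := potential_step α (c j) (fun a => ∑ t ∈ Finset.range j, Q t a) (m j) (Q j) (π j) hα
        (hπ j (by omega)) (hc j (by omega))
      have := ih (by omega)
      simp only [Finset.sum_range_succ]
      linarith
  have h1 := key n le_rfl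
  have h2 := avg_le_log_sum_exp p (fun a => α * ∑ t ∈ Finset.range n, Q t a) hp hp1
  have h3 : ∑ a, p a * (α * ∑ t ∈ Finset.range n, Q t a) =
      α * ∑ i ∈ Finset.range n, ∑ a, Q i a * p a := by
    rw [Finset.sum_comm, Finset.mul_sum]
    refine Finset.sum_congr rfl fun a _ => ?_
    rw [← Finset.sum_mul]
    ring
  simp_rw [mul_sub, Finset.sum_sub_distrib]
  rw [← mul_le_mul_iff_right₀ hα, mul_add, mul_div_cancel₀ _ hα.ne']
  linarith

/-- Cost of moving from the initial comparator `q 0` to the moving one. The value `D 0` is any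
nonnegative number, which leaves room for the jump across the start of the period. -/
lemma comparator_drift {𝒜 : Type*} [Fintype 𝒜] (H : ℝ) (n : ℕ) (Q q : ℕ → 𝒜 → ℝ)
    (D : ℕ → ℝ) (hH : 0 ≤ H) (hQ : ∀ i < n, ∀ a, |Q i a| ≤ H) (hD0 : ∀ i, 0 ≤ D i)
    (hD : ∀ i, ∑ a, |q (i + 1) a - q i a| ≤ D (i + 1)) :
    ∑ i ∈ Finset.range n, ∑ a, Q i a * (q i a - q 0 a) ≤
      n * H * ∑ i ∈ Finset.range n, D i := by
  have tele : ∀ i, ∑ a, |q i a - q 0 a| ≤ ∑ j ∈ Finset.range (i + 1), D j := by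
    intro i
    induction i with
    | zero => simpa using hD0 0
    | succ i ih =>
      rw [Finset.sum_range_succ]
      calc ∑ a, |q (i + 1) a - q 0 a| ≤ ∑ a, (|q i a - q 0 a| + |q (i + 1) a - q i a|) := by
            refine Finset.sum_le_sum fun a _ => ?_
            linarith [abs_sub_le (q (i + 1) a) (q i a) (q 0 a)]
        _ ≤ _ := by rw [Finset.sum_add_distrib]; linarith [hD i]
  have hi : ∀ i ∈ Finset.range n, ∑ a, Q i a * (q i a - q 0 a) ≤
      H * ∑ j ∈ Finset.range n, D j := by
    intro i hi
    rw [Finset.mem_range] at hi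
    calc ∑ a, Q i a * (q i a - q 0 a) ≤ ∑ a, H * |q i a - q 0 a| := by
          refine Finset.sum_le_sum fun a _ => ?_
          refine (le_abs_self (Q i a * (q i a - q 0 a))).trans ?_
          rw [abs_mul]
          exact mul_le_mul_of_nonneg_right (hQ i hi a) (abs_nonneg _)
      _ = H * ∑ a, |q i a - q 0 a| := by rw [Finset.mul_sum]
      _ ≤ H * ∑ j ∈ Finset.range n, D j := by
          refine mul_le_mul_of_nonneg_left ((tele i).trans ?_) hH
          exact Finset.sum_le_sum_of_subset_of_nonneg
            (Finset.range_subset_range.2 (by omega)) fun j _ _ => hD0 j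
  refine (Finset.sum_le_sum hi).trans_eq ?_
  rw [Finset.sum_const, Finset.card_range, nsmul_eq_mul, mul_assoc]

/-- Dynamic regret bound for optimistic exponential weights with periodic
restarts (abstract form of the POWER++ performance difference bound).
Here `Qpred k` plays the role of the reference function `Q̃^{k-1}`. -/
theorem restarted_optimistic_exp_weights_dynamic_regret
    {𝒜 : Type*} [Fintype 𝒜] [Nonempty 𝒜]
    (A : ℕ) (hA : Fintype.card 𝒜 = A)
    (H α : ℝ) (hH : 0 ≤ H) (hα : 0 < α)
    (τ L K : ℕ) (hτ : 0 < τ) (hL : 0 < L) (hK : K = L * τ)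
    (Q : ℕ → 𝒜 → ℝ)
    (hQ : ∀ k ∈ Finset.Icc 1 K, ∀ a, 0 ≤ Q k a ∧ Q k a ≤ H)
    (Qpred : ℕ → 𝒜 → ℝ)
    (hQpred : ∀ k ∈ Finset.Icc 1 K,
      Qpred k = if k % τ = 1 % τ then (fun _ => 0) else Q (k - 1))
    (π : ℕ → 𝒜 → ℝ)
    (hπ : ∀ l ∈ Finset.Icc 1 L, ∀ k, (l - 1) * τ + 1 ≤ k → k ≤ l * τ →
      ∀ a, π k a =
        Real.exp (α * ((∑ t ∈ Finset.Icc ((l - 1) * τ + 1) (k - 1), Q t a) +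
            Qpred k a)) /
          ∑ b, Real.exp (α * ((∑ t ∈ Finset.Icc ((l - 1) * τ + 1) (k - 1), Q t b) +
            Qpred k b)))
    (q : ℕ → 𝒜 → ℝ)
    (hq : ∀ k ∈ Finset.Icc 1 K, (∀ a, 0 ≤ q k a) ∧ ∑ a, q k a = 1)
    (hq0 : q 0 = q 1) :
    ∑ k ∈ Finset.Icc 1 K, ∑ a, Q k a * (q k a - π k a) ≤
      L * Real.log A / α +
        α * ∑ k ∈ Finset.Icc 1 K,
          (Finset.univ.sup' Finset.univ_nonempty fun a => |Q k a - Qpred k a|) ^ 2 +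
        τ * H * ∑ k ∈ Finset.Icc 1 K, ∑ a, |q k a - q (k - 1) a| := by
  subst hA hK
  have hperiod : ∀ l ∈ Finset.range L,
      ∑ i ∈ Finset.range τ, ∑ a, Q (l * τ + i + 1) a * (q (l * τ + i + 1) a - π (l * τ + i + 1) a) ≤
      Real.log (Fintype.card 𝒜) / α + α * ∑ i ∈ Finset.range τ,
        (Finset.univ.sup' Finset.univ_nonempty
          fun a => |Q (l * τ + i + 1) a - Qpred (l * τ + i + 1) a|) ^ 2 +
        τ * H * ∑ i ∈ Finset.range τ, ∑ a, |q (l * τ + i + 1) a - q (l * τ + i + 1 - 1) a| := by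
    intro l hl
    rw [Finset.mem_range] at hl
    have hmem : ∀ i < τ, l * τ + i + 1 ∈ Finset.Icc 1 (L * τ) := by
      intro i hi
      have : (l + 1) * τ ≤ L * τ := Nat.mul_le_mul_right _ hl
      rw [Nat.succ_mul] at this
      rw [Finset.mem_Icc]
      omega
    -- Within the period, sums over `Icc` are reindexed by the offset from its start.
    have hsum : ∀ i a, ∑ t ∈ Finset.Icc (l * τ + 1) (l * τ + i), Q t a =
        ∑ t ∈ Finset.range i, Q (l * τ + t + 1) a := by
      intro i a
      induction i with
      | zero => simp
      | succ i ih =>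
        rw [← add_assoc, Finset.sum_Icc_succ_top (by omega), ih, Finset.sum_range_succ]
    have hs := static_regret_s13 α hα τ (fun i => Q (l * τ + i + 1)) (fun i => Qpred (l * τ + i + 1))
      (fun i => π (l * τ + i + 1))
      (fun i => Finset.univ.sup' Finset.univ_nonempty
          fun a => |Q (l * τ + i + 1) a - Qpred (l * τ + i + 1) a|)
      (q (l * τ + 0 + 1))
      (by
        intro i hi a
        have h := hπ (l + 1) (Finset.mem_Icc.2 ⟨by omega, by omega⟩) (l * τ + i + 1)
          (by simp only [Nat.add_sub_cancel]; omega) (by rw [Nat.succ_mul]; omega) a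
        simpa only [Nat.add_sub_cancel, hsum] using h)
      (fun i _ a => Finset.le_sup'
        (fun a => |Q (l * τ + i + 1) a - Qpred (l * τ + i + 1) a|) (Finset.mem_univ a))
      (hq _ (hmem 0 hτ)).1 (hq _ (hmem 0 hτ)).2
    have hd := comparator_drift H τ (fun i => Q (l * τ + i + 1)) (fun i => q (l * τ + i + 1))
      (fun i => ∑ a, |q (l * τ + i + 1) a - q (l * τ + i + 1 - 1) a|) hH
      (fun i hi a => by
        obtain ⟨h0, h1⟩ := hQ _ (hmem i hi) a
        rwa [abs_of_nonneg h0])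
      (fun i => Finset.sum_nonneg fun a _ => abs_nonneg _)
      (fun i => le_of_eq rfl)
    refine le_trans (le_of_eq ?_) (add_le_add hs hd)
    rw [← Finset.sum_add_distrib]
    refine Finset.sum_congr rfl fun i _ => ?_
    rw [← Finset.sum_add_distrib]
    exact Finset.sum_congr rfl fun a _ => by ring
  simp only [sum_Icc_mul_eq]
  refine (Finset.sum_le_sum hperiod).trans_eq ?_
  rw [Finset.sum_add_distrib, Finset.sum_add_distrib, Finset.sum_const, Finset.card_range,
    nsmul_eq_mul, ← Finset.mul_sum, ← Finset.mul_sum, mul_div_assoc]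
end
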